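/- Let Γ be a finite extensive-form game with perfect recall. A behavioral strategy profile β* is a subgame perfect equilibrium in behavioral strategies if and only if there exist a behavioral strategy profile β̃*, a belief system μ*, and multipliers λ*, λ̃*, ζ*, ζ̃* such that (β*, β̃*, μ*, λ*, λ̃*, ζ*, ζ̃*) solves the system: C^i_{I_i^j}(I_i^j|β) u^i(a, ϱ^i_{I_i^j}(β^{-I_i^j}, β̃), μ | I_i^j) + λ^i_{I_i^j}(a) − ζ^i_{I_i^j} = 0 and u^i(a, ϱ^i_{I_i^j}(β^{-I_i^j}, β̃), μ | I_i^j) + λ̃^i_{I_i^j}(a) − ζ̃^i_{I_i^j} = 0 for all i ∈ N, j ∈ M_i, a ∈ A(I_i^j); Y^i(I_i^j|β) μ^i_{I_i^j}(h) = Y^i(h|β) and μ^i_{I_i^j}(h) ≥ 0 for all i, j, h ∈ I_i^j; Σ_{h ∈ I_i^j} μ^i_{I_i^j}(h) = 1, Σ_{a ∈ A(I_i^j)} β^i_{I_i^j}(a) = 1, Σ_{a ∈ A(I_i^j)} β̃^i_{I_i^j}(a) = 1 for all i, j; β^i_{I_i^j}(a) λ^i_{I_i^j}(a) = 0, β̃^i_{I_i^j}(a)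 λ̃^i_{I_i^j}(a) = 0, and β^i_{I_i^j}(a) ≥ 0, λ^i_{I_i^j}(a) ≥ 0, β̃^i_{I_i^j}(a) ≥ 0, λ̃^i_{I_i^j}(a) ≥ 0 for all i, j, a ∈ A(I_i^j). -/

import Mathlib

open scoped Classical

noncomputable section

/-- A finite extensive-form game.  Actions are labelled by natural numbers drawn from the
finite pool `actFinset`; a history is the list of actions taken so far; players are `Fin n`
and `P h = none` means that the chance player moves after `h`.  The information sets of
player `i` are `Info i j` for `j < m i`, and `infoIdx h` is the index of the information
set containing a nonterminal history `h` at which some player moves.  Payoffs `u i h` are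
relevant on terminal histories. -/
structure EFG where
  n : ℕ
  actFinset : Finset ℕ
  H : Finset (List ℕ)
  P : List ℕ → Option (Fin n)
  fc : List ℕ → ℕ → ℝ
  m : Fin n → ℕ
  Info : Fin n → ℕ → Finset (List ℕ)
  infoIdx : List ℕ → ℕ
  u : Fin n → List ℕ → ℝ
  empty_mem : ([] : List ℕ) ∈ H
  prefixClosed : ∀ h ∈ H, ∀ h' : List ℕ, h' <+: h → h' ∈ H
  act_mem : ∀ (h : List ℕ) (a : ℕ), h ++ [a] ∈ H → a ∈ actFinset
  fc_nonneg : ∀ h a, 0 ≤ fc h a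
  fc_sum : ∀ h ∈ H, P h = none → (∃ a, h ++ [a] ∈ H) →
    ∑ a ∈ actFinset.filter (fun a => h ++ [a] ∈ H), fc h a = 1
  info_spec : ∀ (i : Fin n) (j : ℕ) (h : List ℕ), j < m i →
    (h ∈ Info i j ↔ h ∈ H ∧ P h = some i ∧ (∃ a, h ++ [a] ∈ H) ∧ infoIdx h = j)
  infoIdx_lt : ∀ (i : Fin n), ∀ h ∈ H, P h = some i → (∃ a, h ++ [a] ∈ H) → infoIdx h < m i
  info_nonempty : ∀ (i : Fin n) (j : ℕ), j < m i → (Info i j).Nonempty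
  info_actions : ∀ (i : Fin n) (j : ℕ), j < m i → ∀ h ∈ Info i j, ∀ h' ∈ Info i j,
    ∀ a : ℕ, (h ++ [a] ∈ H ↔ h' ++ [a] ∈ H)
  act_unique : ∀ (h h' : List ℕ) (a : ℕ), h ∈ H → h' ∈ H → h ++ [a] ∈ H → h' ++ [a] ∈ H →
    P h = P h' ∧ infoIdx h = infoIdx h'

namespace EFG

/-- Behavioral strategy profiles (player, information-set index, action ↦ probability). -/
abbrev Profile (G : EFG) : Type := Fin G.n → ℕ → ℕ → ℝ

/-- Belief systems (player, information-set index, history ↦ probability). -/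
abbrev Belief (G : EFG) : Type := Fin G.n → ℕ → List ℕ → ℝ

variable (G : EFG)

/-- The set `Z` of terminal histories. -/
def Zset : Finset (List ℕ) := G.H.filter fun h => ∀ a : ℕ, h ++ [a] ∉ G.H

/-- The set `A(h)` of actions available after a history. -/
def A (h : List ℕ) : Finset ℕ := G.actFinset.filter fun a => h ++ [a] ∈ G.H

/-- The common action set `A(I_i^j)` of an information set. -/
def infoA (i : Fin G.n) (j : ℕ) : Finset ℕ := (G.Info i j).sup fun h => G.A h

/-- A behavioral strategy of player `i`: a probability distribution on `A(I_i^j)` for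
each information set `I_i^j`. -/
def IsBehStrategy (i : Fin G.n) (b : ℕ → ℕ → ℝ) : Prop :=
  ∀ j < G.m i, (∀ a ∈ G.infoA i j, 0 ≤ b j a) ∧ ∑ a ∈ G.infoA i j, b j a = 1

/-- A behavioral strategy profile. -/
def IsBehProfile (β : G.Profile) : Prop := ∀ i : Fin G.n, G.IsBehStrategy i (β i)

/-- The probability of action `a` at history `h`: the chance distribution if the chance
player moves, and the mover's behavioral strategy otherwise. -/
def moveProb (β : G.Profile) (h : List ℕ) (a : ℕ) : ℝ :=
  (G.P h).elim (G.fc h a) fun i => β i (G.infoIdx h) a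

/-- Player `i`'s record `X_i` of the information sets he encounters along a history and the
actions he takes at them, accumulated starting from the prefix `pre`. -/
def recordFrom (i : Fin G.n) : List ℕ → List ℕ → List (ℕ × ℕ)
  | _, [] => []
  | pre, b :: rest =>
    (if G.P pre = some i then [(G.infoIdx pre, b)] else []) ++ recordFrom i (pre ++ [b]) rest

/-- Perfect recall. -/
def PerfectRecall : Prop :=
  ∀ (i : Fin G.n) (j : ℕ), j < G.m i →
    ∀ h ∈ G.Info i j, ∀ h' ∈ G.Info i j, G.recordFrom i [] h = G.recordFrom i [] h'

/-- Product of the move probabilities along `rest`, continuing from the prefix `pre`. -/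
def prodAlong (β : G.Profile) : List ℕ → List ℕ → ℝ
  | _, [] => 1
  | pre, b :: rest => G.moveProb β pre b * prodAlong β (pre ++ [b]) rest

/-- `ω(h|β)`: the probability that the moves along `h` are played under `β`. -/
def omega (β : G.Profile) (h : List ℕ) : ℝ := G.prodAlong β [] h

/-- `ω(I_i^j|β)`. -/
def omegaInfo (i : Fin G.n) (j : ℕ) (β : G.Profile) : ℝ := ∑ h ∈ G.Info i j, G.omega β h

/-- Product of the move probabilities along `rest` from `pre`, disregarding player `i`'s
own moves. -/
def prodAlongNot (i : Fin G.n) (β : G.Profile) : List ℕ → List ℕ → ℝ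
  | _, [] => 1
  | pre, b :: rest =>
    (if G.P pre = some i then 1 else G.moveProb β pre b) * prodAlongNot i β (pre ++ [b]) rest

/-- `S^i(h|β)`: probability of the moves along `h`, disregarding player `i`'s own moves. -/
def Sh (i : Fin G.n) (β : G.Profile) (h : List ℕ) : ℝ := G.prodAlongNot i β [] h

/-- `S^i(I_i^j|β)`. -/
def SInfo (i : Fin G.n) (j : ℕ) (β : G.Profile) : ℝ := ∑ h ∈ G.Info i j, G.Sh i β h

/-- Product of the move probabilities along `rest` from `pre`, with the factor at prefixes
lying in `I_i^j` omitted. -/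
def prodAlongSkip (i : Fin G.n) (j : ℕ) (β : G.Profile) : List ℕ → List ℕ → ℝ
  | _, [] => 1
  | pre, b :: rest =>
    (if pre ∈ G.Info i j then 1 else G.moveProb β pre b) * prodAlongSkip i j β (pre ++ [b]) rest

/-- `q ∈ M(a, I_i^j)`: `I_i^q` is a first information set of player `i` after action `a`
(every history in `I_i^q` contains `a`, with no later action of `a` lying in any action set
of player `i`). -/
def FirstAfter (i : Fin G.n) (a : ℕ) (q : ℕ) : Prop :=
  q < G.m i ∧ ∀ h ∈ G.Info i q, ∃ l₁ l₂ : List ℕ,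
    h = l₁ ++ a :: l₂ ∧ ∀ b ∈ l₂, ∀ p < G.m i, b ∉ G.infoA i p

/-- `q ∈ M(I_i^j) = ∪_{a ∈ A(I_i^j)} M(a, I_i^j)`. -/
def MInfo (i : Fin G.n) (j : ℕ) (q : ℕ) : Prop := ∃ a ∈ G.infoA i j, G.FirstAfter i a q

/-- `q ∈ Λ(a, I_i^j)`: every history in `I_i^q` contains the action `a`. -/
def LambdaSet (i : Fin G.n) (a : ℕ) (q : ℕ) : Prop :=
  q < G.m i ∧ ∀ h ∈ G.Info i q, ∃ l₁ l₂ : List ℕ, h = l₁ ++ a :: l₂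

/-- `ϱ^i_{I_i^j}(β, β̃)`: replace player `i`'s component of `β` by that of `β̃` at every
information set `I_i^q` such that some history in `I_i^q` contains an action of `A(I_i^j)`. -/
def rho (i : Fin G.n) (j : ℕ) (β βt : G.Profile) : G.Profile := fun p q =>
  if p = i ∧ ∃ h ∈ G.Info i q, ∃ b ∈ h, b ∈ G.infoA i j then βt i q else β p q

/-- A belief system: a probability distribution on each information set. -/
def IsBelief (μ : G.Belief) : Prop :=
  ∀ (i : Fin G.n) (j : ℕ), j < G.m i →
    (∀ h ∈ G.Info i j, 0 ≤ μ i j h) ∧ ∑ h ∈ G.Info i j, μ i j h = 1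

/-- A self-independent belief system for `β`:
`S^i(I_i^j|β) · μ^i_{I_i^j}(h) = S^i(h|β)`. -/
def SelfIndep (β : G.Profile) (μ : G.Belief) : Prop :=
  ∀ (i : Fin G.n) (j : ℕ), j < G.m i → ∀ h ∈ G.Info i j,
    G.SInfo i j β * μ i j h = G.Sh i β h

/-- Auxiliary for `ν`: scan `rest` from `pre` for the subhistory lying in `I_i^j`, then
weight by the belief and multiply the move probabilities of the remaining moves (the move
taken at the subhistory itself being skipped). -/
def nuAux (i : Fin G.n) (j : ℕ) (β : G.Profile) (w : List ℕ → ℝ) : List ℕ → List ℕ → ℝ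
  | _, [] => 0
  | pre, b :: rest =>
    if pre ∈ G.Info i j then w pre * G.prodAlong β (pre ++ [b]) rest
    else nuAux i j β w (pre ++ [b]) rest

/-- `ν^i_{I_i^j}(h | a, β^{-I_i^j}, μ)` (it does not involve the component of `β` at
`I_i^j`). -/
def nu (i : Fin G.n) (j : ℕ) (β : G.Profile) (μ : G.Belief) (h : List ℕ) : ℝ :=
  G.nuAux i j β (μ i j) [] h

/-- `u^i((a, β^{-I_i^j}) ∧ I_i^j)`. -/
def uWedgeAct (i : Fin G.n) (j : ℕ) (a : ℕ) (β : G.Profile) : ℝ :=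
  ∑ h ∈ G.Zset.filter (fun h => a ∈ h), G.u i h * G.prodAlongSkip i j β [] h

/-- `u^i(β ∧ I_i^j)`. -/
def uWedge (i : Fin G.n) (j : ℕ) (β : G.Profile) : ℝ :=
  ∑ h ∈ G.Zset.filter (fun h => ∃ b ∈ h, b ∈ G.infoA i j), G.u i h * G.omega β h

/-- The conditional expected payoff `u^i(a, β^{-I_i^j}, μ | I_i^j)`. -/
def uCond (i : Fin G.n) (j : ℕ) (a : ℕ) (β : G.Profile) (μ : G.Belief) : ℝ :=
  ∑ h ∈ G.Zset.filter (fun h => a ∈ h), G.u i h * G.nu i j β μ h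

/-- The expected payoff `u^i(β)`. -/
def uExp (i : Fin G.n) (β : G.Profile) : ℝ := ∑ h ∈ G.Zset, G.u i h * G.omega β h

/-- The profile obtained from `β` by replacing all of player `i`'s components by `b`. -/
def replace (β : G.Profile) (i : Fin G.n) (b : ℕ → ℕ → ℝ) : G.Profile :=
  fun p => if p = i then b else β p

/-- `β` is a Nash equilibrium in behavioral strategies. -/
def IsNash (β : G.Profile) : Prop :=
  G.IsBehProfile β ∧ ∀ (i : Fin G.n) (b : ℕ → ℕ → ℝ), G.IsBehStrategy i b →
    G.uExp i (G.replace β i b) ≤ G.uExp i β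

/-- `(β, β̃, μ)` satisfies the Nash characterization (Definition 2 of the paper). -/
def NashChar (β βt : G.Profile) (μ : G.Belief) : Prop :=
  (∀ (i : Fin G.n) (j : ℕ), j < G.m i → ∀ a' ∈ G.infoA i j, ∀ a'' ∈ G.infoA i j,
    G.uWedgeAct i j a' (G.rho i j β βt) < G.uWedgeAct i j a'' (G.rho i j β βt) →
    β i j a' = 0) ∧
  (∀ (i : Fin G.n) (j : ℕ), j < G.m i → ∀ a' ∈ G.infoA i j, ∀ a'' ∈ G.infoA i j,
    G.uCond i j a' (G.rho i j β βt) μ < G.uCond i j a'' (G.rho i j β βt) μ →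
    βt i j a' = 0) ∧
  G.IsBelief μ ∧ G.SelfIndep β μ

/-- `r` is the root of a subgame: every information set lies entirely inside or entirely
outside the set of histories extending `r`. -/
def IsSubgameRoot (r : List ℕ) : Prop :=
  r ∈ G.H ∧ ∀ (i : Fin G.n) (j : ℕ), j < G.m i →
    (∀ h ∈ G.Info i j, r <+: h) ∨ ∀ h ∈ G.Info i j, ¬ r <+: h

/-- The depth `g` of the smallest subgame containing `A(I_i^j)` (the length of the longest
subgame root preceding every history of `I_i^j`). -/
def sgDepthInfo (i : Fin G.n) (j : ℕ) : ℕ :=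
  (G.H.filter fun r => G.IsSubgameRoot r ∧ ∀ h ∈ G.Info i j, r <+: h).sup List.length

/-- The depth `q(h)` of the smallest subgame containing the last action of `h`. -/
def sgDepthHist (h : List ℕ) : ℕ :=
  (G.H.filter fun r => G.IsSubgameRoot r ∧ r <+: h.dropLast).sup List.length

/-- `C^i_{I_i^j}(h|β)`: product of move probabilities along `h` within the smallest subgame
containing `A(I_i^j)`. -/
def Ch (i : Fin G.n) (j : ℕ) (β : G.Profile) (h : List ℕ) : ℝ :=
  G.prodAlong β (h.take (G.sgDepthInfo i j)) (h.drop (G.sgDepthInfo i j))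

/-- `C^i_{I_i^j}(I_i^j|β)`. -/
def CInfo (i : Fin G.n) (j : ℕ) (β : G.Profile) : ℝ := ∑ h ∈ G.Info i j, G.Ch i j β h

/-- `u^i((a, β^{-I_i^j}) ⋄ I_i^j)`. -/
def uDiamondAct (i : Fin G.n) (j : ℕ) (a : ℕ) (β : G.Profile) : ℝ :=
  ∑ h ∈ G.Zset.filter (fun h => a ∈ h), G.u i h *
    G.prodAlongSkip i j β (h.take (G.sgDepthInfo i j)) (h.drop (G.sgDepthInfo i j))

/-- `Y^i(h|β)`: like `S^i(h|β)` but within the smallest subgame containing the last action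
of `h`. -/
def Yh (i : Fin G.n) (β : G.Profile) (h : List ℕ) : ℝ :=
  G.prodAlongNot i β (h.take (G.sgDepthHist h)) (h.drop (G.sgDepthHist h))

/-- `Y^i(I_i^j|β)`. -/
def YInfo (i : Fin G.n) (j : ℕ) (β : G.Profile) : ℝ := ∑ h ∈ G.Info i j, G.Yh i β h

/-- The belief condition `Y^i(I_i^j|β) · μ^i_{I_i^j}(h) = Y^i(h|β)`. -/
def YConsistent (β : G.Profile) (μ : G.Belief) : Prop :=
  ∀ (i : Fin G.n) (j : ℕ), j < G.m i → ∀ h ∈ G.Info i j,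
    G.YInfo i j β * μ i j h = G.Yh i β h

/-- The expected payoff of player `i` in the subgame rooted at `r` (payoffs of terminal
histories extending `r`, weighted by the move probabilities within the subgame). -/
def uExpFrom (i : Fin G.n) (β : G.Profile) (r : List ℕ) : ℝ :=
  ∑ h ∈ G.Zset.filter (fun h => r <+: h), G.u i h * G.prodAlong β r (h.drop r.length)

/-- `β` is a subgame perfect equilibrium in behavioral strategies: its restriction to every
subgame is a Nash equilibrium in behavioral strategies of that subgame. -/
def IsSubgamePerfect (β : G.Profile) : Prop :=
  G.IsBehProfile β ∧ ∀ r : List ℕ, G.IsSubgameRoot r →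
    ∀ (i : Fin G.n) (b : ℕ → ℕ → ℝ), G.IsBehStrategy i b →
      G.uExpFrom i (G.replace β i b) r ≤ G.uExpFrom i β r

/-- `(β, β̃, μ)` satisfies the subgame perfect characterization (Definition 6 of the
paper). -/
def SubgameChar (β βt : G.Profile) (μ : G.Belief) : Prop :=
  (∀ (i : Fin G.n) (j : ℕ), j < G.m i → ∀ a' ∈ G.infoA i j, ∀ a'' ∈ G.infoA i j,
    G.uDiamondAct i j a' (G.rho i j β βt) < G.uDiamondAct i j a'' (G.rho i j β βt) →
    β i j a' = 0) ∧
  (∀ (i : Fin G.n) (j : ℕ), j < G.m i → ∀ a' ∈ G.infoA i j, ∀ a'' ∈ G.infoA i j,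
    G.uCond i j a' (G.rho i j β βt) μ < G.uCond i j a'' (G.rho i j β βt) μ →
    βt i j a' = 0) ∧
  G.IsBelief μ ∧ G.YConsistent β μ

/-- `(β, μ)` is a semi-sequential equilibrium. -/
def SemiSeqEq (β : G.Profile) (μ : G.Belief) : Prop :=
  G.IsBehProfile β ∧ G.IsBelief μ ∧ G.SelfIndep β μ ∧
  ∀ (i : Fin G.n) (j : ℕ), j < G.m i → ∀ a' ∈ G.infoA i j, ∀ a'' ∈ G.infoA i j,
    G.uCond i j a' β μ < G.uCond i j a'' β μ → β i j a' = 0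

/-- `(β, μ)` is a subgame perfect semi-sequential equilibrium. -/
def SubgameSemiSeqEq (β : G.Profile) (μ : G.Belief) : Prop :=
  G.IsBehProfile β ∧ G.IsBelief μ ∧ G.YConsistent β μ ∧
  ∀ (i : Fin G.n) (j : ℕ), j < G.m i → ∀ a' ∈ G.infoA i j, ∀ a'' ∈ G.infoA i j,
    G.uCond i j a' β μ < G.uCond i j a'' β μ → β i j a' = 0

/-- `d(I_i^j)`: the number of information sets of player `i` containing a prefix of some
history of `I_i^j` (counting `I_i^j` itself). -/
def dInfo (i : Fin G.n) (j : ℕ) : ℕ :=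
  ((Finset.range (G.m i)).filter
    (fun q => ∃ h ∈ G.Info i j, ∃ p : List ℕ, p <+: h ∧ p ∈ G.Info i q)).card

end EFG

/-! Fix a profile `β`, a consistent belief `μ` and a profile `β̃`, and let `U_j(a)` be the payoff
of player `i` from taking `a` at `I_j`, given `μ`, when he continues with `β̃`.  Telescoping the
payoff over the tree, one move at a time, gives in the subgame at `r` and for every strategy `b`
of player `i`
`u(β̃ⁱ, β⁻ⁱ) - u(b, β⁻ⁱ) = ∑ j, P_b(r → root j) * C_j(b) * ∑ a, (β̃_j(a) - b_j(a)) * U_j(a)`,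
where `j` ranges over the information sets in the subgame and `root j` is the root of the smallest
subgame around `I_j`.  Perfect recall enters because it makes player `i`'s own contribution to the
probability of reaching `h ∈ I_j` independent of `h`, so that `μ` is the conditional distribution
on `I_j` whatever `b` is.

If every `β̃_j` maximizes `U_j`, all the summands are nonnegative, so `(β̃ⁱ, β⁻ⁱ)` is a best reply
in every subgame.  Hence `β` is subgame perfect iff it does as well as `β̃` in every subgame, that
is, iff each `β_j` maximizes `C_j(β) * U_j`.  The multipliers encode optimality over a simplex, and
an optimal `β̃` exists by backward induction, because `U_j` involves only the later components of
`β̃`. -/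

section Distributions

variable {α : Type*} {s : Finset α} {v x : α → ℝ}

/-- `x` is a probability distribution on the finite set `s`; its values outside `s` are
irrelevant. -/
def IsDistOn (s : Finset α) (x : α → ℝ) : Prop := (∀ a ∈ s, 0 ≤ x a) ∧ ∑ a ∈ s, x a = 1

/-- The mixed action `x` on `s` is optimal for the payoffs `v`, expressed by comparison with the
pure actions only. -/
def IsOptimalOn (s : Finset α) (v x : α → ℝ) : Prop := ∀ a ∈ s, v a ≤ ∑ c ∈ s, x c * v c

lemma isDistOn_single {c : α} (hc : c ∈ s) : IsDistOn s (Pi.single c 1) :=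
  ⟨fun a _ => (Pi.single_nonneg.2 zero_le_one : (0 : α → ℝ) ≤ Pi.single c 1) a,
    by simp [Finset.sum_pi_single', hc]⟩

lemma IsDistOn.sum_mul_le {C : ℝ} (hx : IsDistOn s x) (hv : ∀ a ∈ s, v a ≤ C) :
    ∑ a ∈ s, x a * v a ≤ C :=
  calc ∑ a ∈ s, x a * v a ≤ ∑ a ∈ s, x a * C :=
        Finset.sum_le_sum fun a ha => mul_le_mul_of_nonneg_left (hv a ha) (hx.1 a ha)
    _ = C := by rw [← Finset.sum_mul, hx.2, one_mul]

lemma exists_isDistOn_isOptimalOn (hs : s.Nonempty) (v : α → ℝ) :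
    ∃ x, IsDistOn s x ∧ IsOptimalOn s v x := by
  obtain ⟨c, hc, hmax⟩ := s.exists_max_image v hs
  refine ⟨Pi.single c 1, isDistOn_single hc, fun a ha => (hmax a ha).trans_eq ?_⟩
  simp [Pi.single_apply, hc]

lemma exists_isDistOn_sum_mul_eq {w : α → ℝ} (hs : s.Nonempty) (hw : ∀ a ∈ s, 0 ≤ w a) :
    ∃ x, IsDistOn s x ∧ ∀ a ∈ s, (∑ c ∈ s, w c) * x a = w a := by
  obtain h0 | h0 := eq_or_ne (∑ c ∈ s, w c) 0
  · obtain ⟨c, hc⟩ := hs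
    refine ⟨Pi.single c 1, isDistOn_single hc, fun a ha => ?_⟩
    rw [h0, zero_mul, (Finset.sum_eq_zero_iff_of_nonneg hw).1 h0 a ha]
  · refine ⟨fun a => w a / ∑ c ∈ s, w c, ⟨fun a ha => ?_, ?_⟩, fun a _ => mul_div_cancel₀ _ h0⟩
    · exact div_nonneg (hw a ha) (Finset.sum_nonneg hw)
    · rw [← Finset.sum_div, div_self h0]

lemma IsDistOn.isOptimalOn_iff_exists_multiplier (hx : IsDistOn s x) :
    IsOptimalOn s v x ↔
      ∃ (l : α → ℝ) (z : ℝ), ∀ a ∈ s, v a + l a - z = 0 ∧ x a * l a = 0 ∧ 0 ≤ l a := by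
  constructor
  · intro hopt
    set z := ∑ c ∈ s, x c * v c with hz
    have slack_nonneg : ∀ a ∈ s, 0 ≤ x a * (z - v a) := fun a ha =>
      mul_nonneg (hx.1 a ha) (sub_nonneg.2 (hopt a ha))
    have sum_slack : ∑ a ∈ s, x a * (z - v a) = 0 := by
      simp only [mul_sub, Finset.sum_sub_distrib, ← Finset.sum_mul, hx.2, ← hz, one_mul, sub_self]
    exact ⟨fun a => z - v a, z, fun a ha => ⟨by ring,
      (Finset.sum_eq_zero_iff_of_nonneg slack_nonneg).1 sum_slack a ha, sub_nonneg.2 (hopt a ha)⟩⟩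
  · rintro ⟨l, z, h⟩ a ha
    have sum_eq : ∑ c ∈ s, x c * v c = z :=
      calc ∑ c ∈ s, x c * v c = ∑ c ∈ s, x c * z := Finset.sum_congr rfl fun c hc => by
            linear_combination x c * (h c hc).1 - (h c hc).2.1
        _ = z := by rw [← Finset.sum_mul, hx.2, one_mul]
    linarith [h a ha]

end Distributions

lemma exists_forall_of_wellFounded {ι α : Type*} [Nonempty α] {r : ι → ι → Prop}
    (hr : WellFounded r) {P : ι → (ι → α) → α → Prop}
    (hlocal : ∀ x σ τ a, (∀ y, r y x → σ y = τ y) → P x σ a → P x τ a)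
    (hex : ∀ x σ, ∃ a, P x σ a) : ∃ σ : ι → α, ∀ x, P x σ (σ x) := by
  choose best hbest using hex
  let σ : ι → α := hr.fix fun x rec =>
    best x fun y => if h : r y x then rec y h else Classical.arbitrary α
  refine ⟨σ, fun x => ?_⟩
  have hσ : σ x = best x fun y => if r y x then σ y else Classical.arbitrary α := hr.fix_eq _ x
  rw [hσ]
  exact hlocal x _ σ _ (fun y hy => if_pos hy) (hbest x _)

namespace EFG

variable {G : EFG} {i : Fin G.n} {j a : ℕ} {h r : List ℕ} {β βt σ τ : G.Profile} {μ : G.Belief}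
  {b : ℕ → ℕ → ℝ}

section Histories

lemma mem_H_of_concat_mem (ha : h ++ [a] ∈ G.H) : h ∈ G.H :=
  G.prefixClosed _ ha _ (List.prefix_append _ _)

lemma mem_A_iff : a ∈ G.A h ↔ h ++ [a] ∈ G.H := by
  simpa only [A, Finset.mem_filter, and_iff_right_iff_imp] using G.act_mem h a

lemma mem_infoA_iff : a ∈ G.infoA i j ↔ ∃ h ∈ G.Info i j, h ++ [a] ∈ G.H := by
  simp only [infoA, Finset.mem_sup, mem_A_iff]

lemma mem_H_of_mem_info (hj : j < G.m i) (hh : h ∈ G.Info i j) : h ∈ G.H :=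
  ((G.info_spec i j h hj).1 hh).1

lemma P_of_mem_info (hj : j < G.m i) (hh : h ∈ G.Info i j) : G.P h = some i :=
  ((G.info_spec i j h hj).1 hh).2.1

lemma infoIdx_of_mem_info (hj : j < G.m i) (hh : h ∈ G.Info i j) : G.infoIdx h = j :=
  ((G.info_spec i j h hj).1 hh).2.2.2

lemma infoIdx_lt_of_concat_mem (ha : h ++ [a] ∈ G.H) (hP : G.P h = some i) :
    G.infoIdx h < G.m i :=
  G.infoIdx_lt i h (mem_H_of_concat_mem ha) hP ⟨a, ha⟩

lemma mem_info_infoIdx (ha : h ++ [a] ∈ G.H) (hP : G.P h = some i) :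
    h ∈ G.Info i (G.infoIdx h) :=
  (G.info_spec i _ h (infoIdx_lt_of_concat_mem ha hP)).2
    ⟨mem_H_of_concat_mem ha, hP, ⟨a, ha⟩, rfl⟩

lemma infoA_eq_A (hj : j < G.m i) (hh : h ∈ G.Info i j) : G.infoA i j = G.A h := by
  ext a
  rw [mem_infoA_iff, mem_A_iff]
  exact ⟨fun ⟨h', hh', ha⟩ => (G.info_actions i j hj h' hh' h hh a).1 ha, fun ha => ⟨h, hh, ha⟩⟩

lemma infoA_nonempty (hj : j < G.m i) : (G.infoA i j).Nonempty := by
  obtain ⟨h, hh⟩ := G.info_nonempty i j hj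
  obtain ⟨-, -, ⟨a, ha⟩, -⟩ := (G.info_spec i j h hj).1 hh
  exact ⟨a, mem_infoA_iff.2 ⟨h, hh, ha⟩⟩

lemma mem_info_of_mem_infoA (hj : j < G.m i) (ha : a ∈ G.infoA i j) (hH : h ++ [a] ∈ G.H) :
    h ∈ G.Info i j := by
  obtain ⟨h', hh', hH'⟩ := mem_infoA_iff.1 ha
  have hmem := mem_H_of_concat_mem hH
  obtain ⟨hP, hidx⟩ := G.act_unique h h' a hmem (mem_H_of_concat_mem hH') hH hH'
  exact (G.info_spec i j h hj).2 ⟨hmem, hP.trans (P_of_mem_info hj hh'), ⟨a, hH⟩,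
    hidx.trans (infoIdx_of_mem_info hj hh')⟩

@[elab_as_elim]
theorem history_induction {motive : ∀ r, r ∈ G.H → Prop}
    (step : ∀ r (hr : r ∈ G.H), (∀ a (ha : a ∈ G.A r), motive (r ++ [a]) (mem_A_iff.1 ha)) →
      motive r hr) {r : List ℕ} (hr : r ∈ G.H) : motive r hr :=
  step r hr fun _ ha => history_induction step (mem_A_iff.1 ha)
termination_by G.H.sup List.length - r.length
decreasing_by
  have := Finset.le_sup (f := List.length) (mem_A_iff.1 ha)
  simp only [List.length_append, List.length_singleton] at this ⊢
  omega

lemma sum_filter_prefix {S : Finset (List ℕ)} (hS : S ⊆ G.H) (r : List ℕ) (f : List ℕ → ℝ) :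
    ∑ h ∈ S with r <+: h, f h =
      (if r ∈ S then f r else 0) + ∑ a ∈ G.A r, ∑ h ∈ S with r ++ [a] <+: h, f h := by
  simp only [Finset.sum_filter]
  rw [Finset.sum_comm, ← Finset.sum_ite_eq S r f, ← Finset.sum_add_distrib]
  refine Finset.sum_congr rfl fun h hh => ?_
  by_cases hrh : r <+: h
  · obtain ⟨_ | ⟨c, t⟩, rfl⟩ := hrh
    · have hlong : ∀ a, ¬ r ++ [a] <+: r := fun a ha => by simpa using ha.length_le
      simp [hlong]
    · have hc : c ∈ G.A r := mem_A_iff.2 (G.prefixClosed _ (hS hh) _ ⟨t, by simp⟩)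
      simp [List.prefix_append_right_inj, hc]
  · have hne : r ≠ h := fun e => hrh (e ▸ List.prefix_rfl)
    have hstep : ∀ a, ¬ r ++ [a] <+: h := fun a ha => hrh ((List.prefix_append _ _).trans ha)
    simp [hrh, hne, hstep]

end Histories

section PerfectRecall

lemma recordFrom_append (pre l₁ l₂ : List ℕ) :
    G.recordFrom i pre (l₁ ++ l₂) = G.recordFrom i pre l₁ ++ G.recordFrom i (pre ++ l₁) l₂ := by
  induction l₁ generalizing pre with
  | nil => simp [recordFrom]
  | cons c t ih => simp [recordFrom, ih]

lemma length_recordFrom_lt (hj : j < G.m i) (hh : h ∈ G.Info i j) (c : ℕ) (t : List ℕ) :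
    (G.recordFrom i [] h).length < (G.recordFrom i [] (h ++ c :: t)).length := by
  simp [recordFrom_append, recordFrom, P_of_mem_info hj hh]

lemma PerfectRecall.eq_of_prefix (hPR : G.PerfectRecall) (hj : j < G.m i) {h h' : List ℕ}
    (hh : h ∈ G.Info i j) (hh' : h' ∈ G.Info i j) (hpre : h <+: h') : h = h' := by
  obtain ⟨_ | ⟨c, t⟩, rfl⟩ := hpre
  · simp
  · exact absurd (congrArg List.length (hPR i j hj _ hh _ hh')) (length_recordFrom_lt hj hh c t).ne

lemma PerfectRecall.eq_of_common_extension (hPR : G.PerfectRecall) (hj : j < G.m i)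
    {h h' z : List ℕ} (hh : h ∈ G.Info i j) (hh' : h' ∈ G.Info i j) (hz : h <+: z)
    (hz' : h' <+: z) : h = h' := by
  rcases List.prefix_or_prefix_of_prefix hz hz' with hpre | hpre
  · exact hPR.eq_of_prefix hj hh hh' hpre
  · exact (hPR.eq_of_prefix hj hh' hh hpre).symm

variable (G) in
/-- The number of player `i`'s own moves before `I_i^j`, the rank for backward induction.  Under
perfect recall it does not depend on the history in `I_i^j`; otherwise this is the maximum. -/
def ownDepth (i : Fin G.n) (j : ℕ) : ℕ := (G.Info i j).sup fun h => (G.recordFrom i [] h).length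

lemma PerfectRecall.ownDepth_eq (hPR : G.PerfectRecall) (hj : j < G.m i) (hh : h ∈ G.Info i j) :
    G.ownDepth i j = (G.recordFrom i [] h).length :=
  le_antisymm (Finset.sup_le fun h' hh' => (congrArg List.length (hPR i j hj h' hh' h hh)).le)
    (Finset.le_sup (f := fun h => (G.recordFrom i [] h).length) hh)

lemma PerfectRecall.ownDepth_lt (hPR : G.PerfectRecall) {q : ℕ} (hj : j < G.m i)
    (hq : q < G.m i) (hh : h ∈ G.Info i q) (hah : a ∈ h) (ha : a ∈ G.infoA i j) :
    G.ownDepth i j < G.ownDepth i q := by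
  obtain ⟨p, t, rfl⟩ := List.append_of_mem hah
  have hp : p ∈ G.Info i j := mem_info_of_mem_infoA hj ha
    (G.prefixClosed _ (mem_H_of_mem_info hq hh) _ ⟨t, by simp⟩)
  rw [hPR.ownDepth_eq hj hp, hPR.ownDepth_eq hq hh]
  exact length_recordFrom_lt hj hp a t

end PerfectRecall

section MoveProbabilities

lemma moveProb_of_mem_info (hj : j < G.m i) (hh : h ∈ G.Info i j) (σ : G.Profile) (a : ℕ) :
    G.moveProb σ h a = σ i j a := by
  simp [moveProb, P_of_mem_info hj hh, infoIdx_of_mem_info hj hh]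

lemma moveProb_congr (hστ : ∀ p, G.P h = some p → σ p (G.infoIdx h) = τ p (G.infoIdx h)) :
    G.moveProb σ h a = G.moveProb τ h a := by
  unfold moveProb
  cases hP : G.P h with
  | none => rfl
  | some p => exact congrFun (hστ p hP) a

lemma replace_apply_self (β : G.Profile) (i : Fin G.n) (b : ℕ → ℕ → ℝ) :
    G.replace β i b i = b := if_pos rfl

lemma replace_apply_of_ne {p : Fin G.n} (hp : p ≠ i) : G.replace β i b p = β p := if_neg hp

lemma replace_eq_self (β : G.Profile) (i : Fin G.n) : G.replace β i (β i) = β :=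
  funext fun p => by by_cases hp : p = i <;> simp [replace, hp]

lemma moveProb_replace_of_ne (hP : G.P h ≠ some i) :
    G.moveProb (G.replace β i b) h a = G.moveProb β h a :=
  moveProb_congr fun p hp => by rw [replace_apply_of_ne (by rintro rfl; exact hP hp)]

lemma IsBehProfile.replace (hβ : G.IsBehProfile β) (hb : G.IsBehStrategy i b) :
    G.IsBehProfile (G.replace β i b) := by
  intro p
  by_cases hp : p = i
  · subst hp
    rwa [replace_apply_self]
  · rw [replace_apply_of_ne hp]
    exact hβ p

lemma IsBehProfile.moveProb_nonneg (hσ : G.IsBehProfile σ) (ha : h ++ [a] ∈ G.H) :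
    0 ≤ G.moveProb σ h a := by
  cases hP : G.P h with
  | none => simpa [moveProb, hP] using G.fc_nonneg h a
  | some p =>
    have hj := infoIdx_lt_of_concat_mem ha hP
    have hh := mem_info_infoIdx ha hP
    rw [moveProb_of_mem_info hj hh]
    exact (hσ p _ hj).1 a (mem_infoA_iff.2 ⟨h, hh, ha⟩)

lemma IsBehProfile.prodAlong_nonneg (hσ : G.IsBehProfile σ) {pre l : List ℕ}
    (hl : pre ++ l ∈ G.H) : 0 ≤ G.prodAlong σ pre l := by
  induction l generalizing pre with
  | nil => exact zero_le_one
  | cons c t ih =>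
    rw [List.append_cons] at hl
    exact mul_nonneg (hσ.moveProb_nonneg (G.prefixClosed _ hl _ (List.prefix_append _ _))) (ih hl)

lemma IsBehProfile.prodAlongNot_nonneg (hσ : G.IsBehProfile σ) (i : Fin G.n) {pre l : List ℕ}
    (hl : pre ++ l ∈ G.H) : 0 ≤ G.prodAlongNot i σ pre l := by
  induction l generalizing pre with
  | nil => exact zero_le_one
  | cons c t ih =>
    rw [List.append_cons] at hl
    refine mul_nonneg ?_ (ih hl)
    split_ifs
    · exact zero_le_one
    · exact hσ.moveProb_nonneg (G.prefixClosed _ hl _ (List.prefix_append _ _))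

lemma prodAlong_append (σ : G.Profile) (pre l₁ l₂ : List ℕ) :
    G.prodAlong σ pre (l₁ ++ l₂) = G.prodAlong σ pre l₁ * G.prodAlong σ (pre ++ l₁) l₂ := by
  induction l₁ generalizing pre with
  | nil => simp [prodAlong]
  | cons c t ih => simp [prodAlong, ih, mul_assoc]

/-- The probability with which a player using `b` makes the moves listed in one of his records,
that is, his own factor in the probability of a history. -/
def recordProb (b : ℕ → ℕ → ℝ) (X : List (ℕ × ℕ)) : ℝ := (X.map fun p => b p.1 p.2).prod

lemma prodAlong_replace (β : G.Profile) (b : ℕ → ℕ → ℝ) (pre l : List ℕ) :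
    G.prodAlong (G.replace β i b) pre l =
      recordProb b (G.recordFrom i pre l) * G.prodAlongNot i β pre l := by
  induction l generalizing pre with
  | nil => simp [prodAlong, prodAlongNot, recordProb, recordFrom]
  | cons c t ih =>
    by_cases hP : G.P pre = some i
    · simp [prodAlong, prodAlongNot, recordFrom, recordProb, hP, moveProb, replace_apply_self, ih,
        mul_assoc]
    · simp only [prodAlong, prodAlongNot, recordFrom, hP, if_false, List.nil_append, ih,
        moveProb_replace_of_ne hP]
      ring

variable (G) in
/-- The probability under `σ` of the moves leading from `r` to `h`, meaningful only when `r` is a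
prefix of `h`. -/
def probFrom (σ : G.Profile) (r h : List ℕ) : ℝ := G.prodAlong σ r (h.drop r.length)

lemma probFrom_append (σ : G.Profile) (r t : List ℕ) :
    G.probFrom σ r (r ++ t) = G.prodAlong σ r t := by rw [probFrom, List.drop_left]

lemma probFrom_self (σ : G.Profile) (r : List ℕ) : G.probFrom σ r r = 1 := by
  simp [probFrom, prodAlong]

lemma probFrom_concat (σ : G.Profile) (r : List ℕ) (a : ℕ) :
    G.probFrom σ r (r ++ [a]) = G.moveProb σ r a := by
  simp [probFrom_append, prodAlong]

lemma probFrom_mul_probFrom (σ : G.Profile) {s : List ℕ} (hrs : r <+: s) (hsh : s <+: h) :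
    G.probFrom σ r s * G.probFrom σ s h = G.probFrom σ r h := by
  obtain ⟨t, rfl⟩ := hrs
  obtain ⟨t', rfl⟩ := hsh
  rw [probFrom_append, probFrom_append, List.append_assoc, probFrom_append, prodAlong_append]

lemma IsBehProfile.probFrom_nonneg (hσ : G.IsBehProfile σ) (hrh : r <+: h) (hh : h ∈ G.H) :
    0 ≤ G.probFrom σ r h := by
  obtain ⟨t, rfl⟩ := hrh
  rw [probFrom_append]
  exact hσ.prodAlong_nonneg hh

end MoveProbabilities

section Payoffs

lemma uExpFrom_eq_add_sum (i : Fin G.n) (σ : G.Profile) (r : List ℕ) :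
    G.uExpFrom i σ r = (if r ∈ G.Zset then G.u i r else 0) +
      ∑ a ∈ G.A r, G.moveProb σ r a * G.uExpFrom i σ (r ++ [a]) := by
  change ∑ h ∈ G.Zset with r <+: h, G.u i h * G.probFrom σ r h = _
  rw [sum_filter_prefix (show G.Zset ⊆ G.H from Finset.filter_subset _ _), probFrom_self, mul_one]
  congr 1
  refine Finset.sum_congr rfl fun a _ => ?_
  rw [uExpFrom, Finset.mul_sum]
  refine Finset.sum_congr rfl fun h hh => ?_
  rw [← probFrom_mul_probFrom σ (List.prefix_append r [a]) (Finset.mem_filter.1 hh).2,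
    probFrom_concat, probFrom, mul_left_comm]

lemma uExpFrom_congr (hr : r ∈ G.H) (hστ : ∀ p a, r <+: p → p ++ [a] ∈ G.H →
      G.moveProb σ p a = G.moveProb τ p a) :
    G.uExpFrom i σ r = G.uExpFrom i τ r := by
  induction hr using history_induction with
  | step r _ ih =>
    rw [uExpFrom_eq_add_sum, uExpFrom_eq_add_sum i τ]
    congr 1
    refine Finset.sum_congr rfl fun a ha => ?_
    rw [hστ r a List.prefix_rfl (mem_A_iff.1 ha),
      ih a ha fun p c hp => hστ p c ((List.prefix_append _ _).trans hp)]

variable (G) in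
/-- The change in player `i`'s payoff in the subtree at `h` when the move at `h` is made according
to `σ` instead of `τ` and `σ` is followed afterwards. -/
def oneShotGain (i : Fin G.n) (σ τ : G.Profile) (h : List ℕ) : ℝ :=
  ∑ a ∈ G.A h, (G.moveProb σ h a - G.moveProb τ h a) * G.uExpFrom i σ (h ++ [a])

theorem uExpFrom_sub_uExpFrom (i : Fin G.n) (σ τ : G.Profile) (hr : r ∈ G.H) :
    G.uExpFrom i σ r - G.uExpFrom i τ r =
      ∑ h ∈ G.H with r <+: h, G.probFrom τ r h * G.oneShotGain i σ τ h := by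
  induction hr using history_induction with
  | step r hr ih =>
    calc G.uExpFrom i σ r - G.uExpFrom i τ r
      _ = ∑ a ∈ G.A r, (G.moveProb σ r a * G.uExpFrom i σ (r ++ [a]) -
            G.moveProb τ r a * G.uExpFrom i τ (r ++ [a])) := by
        rw [uExpFrom_eq_add_sum, uExpFrom_eq_add_sum i τ, add_sub_add_left_eq_sub,
          Finset.sum_sub_distrib]
      _ = G.oneShotGain i σ τ r + ∑ a ∈ G.A r, G.moveProb τ r a *
            (G.uExpFrom i σ (r ++ [a]) - G.uExpFrom i τ (r ++ [a])) := by
        rw [oneShotGain, ← Finset.sum_add_distrib]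
        exact Finset.sum_congr rfl fun a _ => by ring
      _ = ∑ h ∈ G.H with r <+: h, G.probFrom τ r h * G.oneShotGain i σ τ h := by
        rw [sum_filter_prefix subset_rfl, if_pos hr, probFrom_self, one_mul]
        congr 1
        refine Finset.sum_congr rfl fun a ha => ?_
        rw [ih a ha, Finset.mul_sum]
        refine Finset.sum_congr rfl fun h hh => ?_
        rw [← probFrom_mul_probFrom τ (List.prefix_append r [a]) (Finset.mem_filter.1 hh).2,
          probFrom_concat, mul_assoc]

lemma oneShotGain_replace_of_notMem_info {b' : ℕ → ℕ → ℝ}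
    (hh : ∀ j < G.m i, h ∉ G.Info i j) :
    G.oneShotGain i (G.replace β i b') (G.replace β i b) h = 0 := by
  refine Finset.sum_eq_zero fun a ha => ?_
  rw [mem_A_iff] at ha
  have hP : G.P h ≠ some i := fun hP =>
    hh _ (infoIdx_lt_of_concat_mem ha hP) (mem_info_infoIdx ha hP)
  rw [moveProb_replace_of_ne hP, moveProb_replace_of_ne hP, sub_self, zero_mul]

lemma nuAux_append_cons {w : List ℕ → ℝ} {pre l : List ℕ} (hmem : pre ++ l ∈ G.Info i j)
    (hfirst : ∀ p ∈ G.Info i j, p <+: pre ++ l → p = pre ++ l) (a : ℕ) (t : List ℕ) :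
    G.nuAux i j σ w pre (l ++ a :: t) = w (pre ++ l) * G.prodAlong σ (pre ++ l ++ [a]) t := by
  induction l generalizing pre with
  | nil =>
    rw [List.append_nil] at hmem
    simp [nuAux, hmem]
  | cons c l ih =>
    have hpre : pre ∉ G.Info i j := fun hp => by
      simpa using hfirst pre hp (List.prefix_append _ _)
    have hassoc : pre ++ c :: l = (pre ++ [c]) ++ l := List.append_cons _ _ _
    rw [hassoc] at hmem hfirst ⊢
    rw [List.cons_append, nuAux, if_neg hpre]
    exact ih hmem hfirst

lemma PerfectRecall.nu_append_cons (hPR : G.PerfectRecall) (hj : j < G.m i)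
    (hh : h ∈ G.Info i j) (a : ℕ) (t : List ℕ) :
    G.nu i j σ μ (h ++ a :: t) = μ i j h * G.prodAlong σ (h ++ [a]) t :=
  nuAux_append_cons (pre := []) hh (fun _ hp => hPR.eq_of_prefix hj hp hh) a t

theorem PerfectRecall.uCond_eq_sum_uExpFrom (hPR : G.PerfectRecall) (hj : j < G.m i)
    (ha : a ∈ G.infoA i j) (σ : G.Profile) (μ : G.Belief) :
    G.uCond i j a σ μ = ∑ h ∈ G.Info i j, μ i j h * G.uExpFrom i σ (h ++ [a]) := by
  have hcover : G.Zset.filter (fun z => a ∈ z) =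
      (G.Info i j).biUnion fun h => G.Zset.filter fun z => h ++ [a] <+: z := by
    ext z
    simp only [Finset.mem_filter, Finset.mem_biUnion]
    constructor
    · rintro ⟨hz, haz⟩
      obtain ⟨h, t, rfl⟩ := List.append_of_mem haz
      have hpre : h ++ [a] <+: h ++ a :: t := ⟨t, by simp⟩
      have hH : h ++ [a] ∈ G.H := G.prefixClosed _ (Finset.mem_filter.1 hz).1 _ hpre
      exact ⟨h, mem_info_of_mem_infoA hj ha hH, hz, hpre⟩
    · rintro ⟨h, -, hz, hpre⟩
      exact ⟨hz, hpre.subset (by simp)⟩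
  have hdisj : (G.Info i j : Set (List ℕ)).PairwiseDisjoint
      fun h => G.Zset.filter fun z => h ++ [a] <+: z := by
    refine fun h hh h' hh' hne => Finset.disjoint_left.2 fun z hz hz' => hne ?_
    exact hPR.eq_of_common_extension hj hh hh'
      ((List.prefix_append _ _).trans (Finset.mem_filter.1 hz).2)
      ((List.prefix_append _ _).trans (Finset.mem_filter.1 hz').2)
  rw [uCond, hcover, Finset.sum_biUnion hdisj]
  refine Finset.sum_congr rfl fun h hh => ?_
  rw [uExpFrom, Finset.mul_sum]
  refine Finset.sum_congr rfl fun z hz => ?_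
  obtain ⟨t, rfl⟩ := (Finset.mem_filter.1 hz).2
  rw [List.drop_left, List.append_assoc, List.singleton_append, hPR.nu_append_cons hj hh]
  ring

lemma uExpFrom_rho_concat (β βt : G.Profile) (hh : h ∈ G.Info i j) (ha : h ++ [a] ∈ G.H) :
    G.uExpFrom i (G.rho i j β βt) (h ++ [a]) =
      G.uExpFrom i (G.replace β i (βt i)) (h ++ [a]) := by
  refine uExpFrom_congr ha fun p c hp hc => moveProb_congr fun k hk => ?_
  by_cases hki : k = i
  · subst hki
    rw [replace_apply_self, rho, if_pos ⟨rfl, p, mem_info_infoIdx hc hk, a, hp.subset (by simp),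
      mem_infoA_iff.2 ⟨h, hh, ha⟩⟩]
  · rw [replace_apply_of_ne hki, rho, if_neg fun hki' => hki hki'.1]

lemma oneShotGain_replace_of_mem_info (hj : j < G.m i) (hh : h ∈ G.Info i j) :
    G.oneShotGain i (G.replace β i (βt i)) (G.replace β i b) h =
      ∑ a ∈ G.infoA i j, (βt i j a - b j a) * G.uExpFrom i (G.rho i j β βt) (h ++ [a]) := by
  rw [oneShotGain, ← infoA_eq_A hj hh]
  refine Finset.sum_congr rfl fun a ha => ?_
  rw [infoA_eq_A hj hh, mem_A_iff] at ha
  simp only [moveProb_of_mem_info hj hh, replace_apply_self, uExpFrom_rho_concat β βt hh ha]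

end Payoffs

section Subgames

lemma isSubgameRoot_nil (G : EFG) : G.IsSubgameRoot [] :=
  ⟨G.empty_mem, fun _ _ _ => Or.inl fun _ _ => List.nil_prefix⟩

lemma exists_infoRoot (i : Fin G.n) (j : ℕ) :
    ∃ r, G.IsSubgameRoot r ∧ (∀ h ∈ G.Info i j, r <+: h) ∧ r.length = G.sgDepthInfo i j := by
  obtain ⟨r, hr, hlen⟩ := Finset.exists_mem_eq_sup
    (G.H.filter fun r => G.IsSubgameRoot r ∧ ∀ h ∈ G.Info i j, r <+: h)
    ⟨[], by simp [G.empty_mem, G.isSubgameRoot_nil]⟩ List.length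
  exact ⟨r, (Finset.mem_filter.1 hr).2.1, (Finset.mem_filter.1 hr).2.2, hlen.symm⟩

variable (G) in
/-- The root of the smallest subgame containing `I_i^j`, whose depth is `sgDepthInfo`. -/
def infoRoot (i : Fin G.n) (j : ℕ) : List ℕ := (G.exists_infoRoot i j).choose

lemma isSubgameRoot_infoRoot (i : Fin G.n) (j : ℕ) : G.IsSubgameRoot (G.infoRoot i j) :=
  (G.exists_infoRoot i j).choose_spec.1

lemma infoRoot_prefix (hh : h ∈ G.Info i j) : G.infoRoot i j <+: h :=
  (G.exists_infoRoot i j).choose_spec.2.1 h hh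

lemma length_infoRoot (i : Fin G.n) (j : ℕ) : (G.infoRoot i j).length = G.sgDepthInfo i j :=
  (G.exists_infoRoot i j).choose_spec.2.2

lemma IsSubgameRoot.prefix_infoRoot (hr : G.IsSubgameRoot r) (hj : j < G.m i)
    (hpre : ∀ h ∈ G.Info i j, r <+: h) : r <+: G.infoRoot i j := by
  obtain ⟨h, hh⟩ := G.info_nonempty i j hj
  refine List.prefix_of_prefix_length_le (hpre h hh) (infoRoot_prefix hh) ?_
  rw [length_infoRoot]
  exact Finset.le_sup (f := List.length) (Finset.mem_filter.2 ⟨hr.1, hr, hpre⟩)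

lemma take_sgDepthInfo (hh : h ∈ G.Info i j) : h.take (G.sgDepthInfo i j) = G.infoRoot i j := by
  rw [← length_infoRoot]
  exact (List.prefix_iff_eq_take.1 (infoRoot_prefix hh)).symm

lemma Ch_eq_probFrom (σ : G.Profile) (hh : h ∈ G.Info i j) :
    G.Ch i j σ h = G.probFrom σ (G.infoRoot i j) h := by
  rw [Ch, probFrom, take_sgDepthInfo hh, length_infoRoot]

lemma IsBehProfile.CInfo_nonneg (hσ : G.IsBehProfile σ) (hj : j < G.m i) : 0 ≤ G.CInfo i j σ :=
  Finset.sum_nonneg fun _ hh => (hσ.probFrom_nonneg (infoRoot_prefix hh)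
    (mem_H_of_mem_info hj hh)).trans_eq (Ch_eq_probFrom σ hh).symm

lemma IsBehProfile.Yh_nonneg (hσ : G.IsBehProfile σ) (i : Fin G.n) (hh : h ∈ G.H) :
    0 ≤ G.Yh i σ h :=
  hσ.prodAlongNot_nonneg i (by rwa [List.take_append_drop])

lemma IsBehProfile.exists_yConsistent_belief (hβ : G.IsBehProfile β) :
    ∃ μ : G.Belief, G.IsBelief μ ∧ G.YConsistent β μ := by
  have h : ∀ (i : Fin G.n) (j : ℕ), j < G.m i → ∃ x, IsDistOn (G.Info i j) x ∧
      ∀ h ∈ G.Info i j, G.YInfo i j β * x h = G.Yh i β h := fun i j hj =>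
    exists_isDistOn_sum_mul_eq (G.info_nonempty i j hj) fun h hh =>
      hβ.Yh_nonneg i (mem_H_of_mem_info hj hh)
  choose! μ hμ hY using h
  exact ⟨μ, hμ, hY⟩

lemma PerfectRecall.sgDepthHist_eq (hPR : G.PerfectRecall) (hj : j < G.m i)
    (hI : (G.Info i j).Nontrivial) (hh : h ∈ G.Info i j) :
    G.sgDepthHist h = G.sgDepthInfo i j := by
  unfold sgDepthHist sgDepthInfo
  congr 1
  refine Finset.filter_congr fun r _ => and_congr_right fun hr => ⟨fun hpre => ?_, fun hall => ?_⟩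
  · exact (hr.2 i j hj).resolve_right fun hnot =>
      hnot h hh (hpre.trans (List.dropLast_prefix h))
  · obtain ⟨h', hh', hne⟩ := hI.exists_ne h
    have hrh : r ≠ h := by
      rintro rfl
      exact hne (hPR.eq_of_prefix hj hh hh' (hall h' hh')).symm
    obtain ⟨t, rfl⟩ := hall h hh
    have ht : t ≠ [] := by
      rintro rfl
      exact hrh (List.append_nil r).symm
    rw [List.dropLast_append_of_ne_nil ht]
    exact List.prefix_append r _

lemma PerfectRecall.recordFrom_infoRoot_eq (hPR : G.PerfectRecall) (hj : j < G.m i)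
    {h h' : List ℕ} (hh : h ∈ G.Info i j) (hh' : h' ∈ G.Info i j) :
    G.recordFrom i (G.infoRoot i j) (h.drop (G.sgDepthInfo i j)) =
      G.recordFrom i (G.infoRoot i j) (h'.drop (G.sgDepthInfo i j)) := by
  have hsplit : ∀ g ∈ G.Info i j, G.recordFrom i [] g = G.recordFrom i [] (G.infoRoot i j) ++
      G.recordFrom i (G.infoRoot i j) (g.drop (G.sgDepthInfo i j)) := fun g hg => by
    obtain ⟨t, rfl⟩ := infoRoot_prefix hg
    rw [← length_infoRoot, List.drop_left, recordFrom_append, List.nil_append]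
  have := hPR i j hj h hh h' hh'
  rwa [hsplit h hh, hsplit h' hh', List.append_cancel_left_eq] at this

lemma PerfectRecall.exists_Ch_replace_eq_mul_Yh (hPR : G.PerfectRecall) (hj : j < G.m i)
    (hI : (G.Info i j).Nontrivial) (β : G.Profile) (b : ℕ → ℕ → ℝ) :
    ∃ c, ∀ h ∈ G.Info i j, G.Ch i j (G.replace β i b) h = c * G.Yh i β h := by
  obtain ⟨g, hg⟩ := hI.nonempty
  refine ⟨recordProb b (G.recordFrom i (G.infoRoot i j) (g.drop (G.sgDepthInfo i j))),
    fun h hh => ?_⟩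
  rw [Ch, Yh, hPR.sgDepthHist_eq hj hI hh, prodAlong_replace, take_sgDepthInfo hh,
    hPR.recordFrom_infoRoot_eq hj hh hg]

/-- If `I_i^j` is a singleton, `Y` is measured in the subgame of the last action before `I_i^j`,
which may be larger than the one used for `C`; but then the belief is trivially right. -/
lemma PerfectRecall.CInfo_replace_mul_belief (hPR : G.PerfectRecall) (hμ : G.IsBelief μ)
    (hY : G.YConsistent β μ) (hj : j < G.m i) (b : ℕ → ℕ → ℝ) (hh : h ∈ G.Info i j) :
    G.CInfo i j (G.replace β i b) * μ i j h = G.Ch i j (G.replace β i b) h := by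
  by_cases hI : (G.Info i j).Nontrivial
  · obtain ⟨c, hc⟩ := hPR.exists_Ch_replace_eq_mul_Yh hj hI β b
    rw [CInfo, Finset.sum_congr rfl hc, ← Finset.mul_sum, mul_assoc, hc h hh, ← hY i j hj h hh,
      YInfo]
  · have hsing : G.Info i j = {h} := by
      refine Finset.eq_singleton_iff_unique_mem.2 ⟨hh, fun g hg => ?_⟩
      by_contra hne
      exact hI ⟨g, hg, h, hh, hne⟩
    have hone := (hμ i j hj).2
    rw [hsing, Finset.sum_singleton] at hone
    rw [CInfo, hsing, Finset.sum_singleton, hone, mul_one]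

variable (G) in
/-- The information sets of player `i` in the subgame rooted at `r`. -/
def subgameInfos (i : Fin G.n) (r : List ℕ) : Finset ℕ :=
  (Finset.range (G.m i)).filter fun j => ∀ h ∈ G.Info i j, r <+: h

lemma mem_subgameInfos : j ∈ G.subgameInfos i r ↔ j < G.m i ∧ ∀ h ∈ G.Info i j, r <+: h := by
  rw [subgameInfos, Finset.mem_filter, Finset.mem_range]

lemma IsSubgameRoot.sum_eq_sum_subgameInfos (hr : G.IsSubgameRoot r) {f : List ℕ → ℝ}
    (hf : ∀ h, (∀ j < G.m i, h ∉ G.Info i j) → f h = 0) :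
    ∑ h ∈ G.H with r <+: h, f h = ∑ j ∈ G.subgameInfos i r, ∑ h ∈ G.Info i j, f h := by
  have hdisj : (G.subgameInfos i r : Set ℕ).PairwiseDisjoint (G.Info i) := by
    refine fun j hj q hq hne => Finset.disjoint_left.2 fun h hhj hhq => hne ?_
    rw [← infoIdx_of_mem_info (mem_subgameInfos.1 hj).1 hhj,
      infoIdx_of_mem_info (mem_subgameInfos.1 hq).1 hhq]
  rw [← Finset.sum_biUnion hdisj]
  refine (Finset.sum_subset (fun h hh => ?_) fun h hh hnot => hf h fun j hj hhj => hnot ?_).symm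
  · obtain ⟨j, hj, hhj⟩ := Finset.mem_biUnion.1 hh
    obtain ⟨hjm, hpre⟩ := mem_subgameInfos.1 hj
    exact Finset.mem_filter.2 ⟨mem_H_of_mem_info hjm hhj, hpre h hhj⟩
  · have hpre := (hr.2 i j hj).resolve_right fun hout => hout h hhj (Finset.mem_filter.1 hh).2
    exact Finset.mem_biUnion.2 ⟨j, mem_subgameInfos.2 ⟨hj, hpre⟩, hhj⟩

end Subgames

section SequentialRationality

/-- Player `i`'s conditional payoff from action `a` at `I_i^j` when he continues with `βt` and the
others play `β`. -/
abbrev contPayoff (β βt : G.Profile) (μ : G.Belief) (i : Fin G.n) (j a : ℕ) : ℝ :=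
  G.uCond i j a (G.rho i j β βt) μ

/-- The gain of player `i` at `I_i^j` from choosing his action there by `βt` instead of `b`,
in conditional payoffs and when he continues with `βt`. -/
def localGain (β βt : G.Profile) (μ : G.Belief) (i : Fin G.n) (b : ℕ → ℕ → ℝ) (j : ℕ) : ℝ :=
  ∑ a ∈ G.infoA i j, (βt i j a - b j a) * contPayoff β βt μ i j a

/-- Against `β` and given the beliefs `μ`, the continuation profile `βt` is optimal at every
information set. -/
def IsSeqRational (β βt : G.Profile) (μ : G.Belief) : Prop :=
  ∀ (i : Fin G.n) (j : ℕ), j < G.m i →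
    IsOptimalOn (G.infoA i j) (contPayoff β βt μ i j) (βt i j)

lemma localGain_eq_sub (β βt : G.Profile) (μ : G.Belief) (i : Fin G.n) (b : ℕ → ℕ → ℝ) (j : ℕ) :
    localGain β βt μ i b j = ∑ a ∈ G.infoA i j, βt i j a * contPayoff β βt μ i j a -
      ∑ a ∈ G.infoA i j, b j a * contPayoff β βt μ i j a := by
  simp only [localGain, sub_mul, Finset.sum_sub_distrib]

lemma IsSeqRational.localGain_nonneg (hrat : IsSeqRational β βt μ) (hb : G.IsBehStrategy i b)
    (hj : j < G.m i) : 0 ≤ localGain β βt μ i b j := by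
  rw [localGain_eq_sub]
  exact sub_nonneg.2 (IsDistOn.sum_mul_le (hb j hj) (hrat i j hj))

lemma contPayoff_congr {βt' : G.Profile}
    (hβt : ∀ q, (∃ h ∈ G.Info i q, ∃ c ∈ h, c ∈ G.infoA i j) → βt i q = βt' i q) :
    contPayoff β βt μ i j = contPayoff β βt' μ i j := by
  have hrho : G.rho i j β βt = G.rho i j β βt' := by
    funext p q
    unfold rho
    split_ifs with hq
    · obtain ⟨rfl, hq⟩ := hq
      exact hβt q hq
    · rfl
  funext a
  rw [contPayoff, contPayoff, hrho]

theorem PerfectRecall.exists_isSeqRational (hPR : G.PerfectRecall) (β : G.Profile)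
    (μ : G.Belief) : ∃ βt : G.Profile, G.IsBehProfile βt ∧ IsSeqRational β βt μ := by
  let later : (Σ i, Fin (G.m i)) → (Σ i, Fin (G.m i)) → Prop := fun y x =>
    G.ownDepth x.1 x.2 < G.ownDepth y.1 y.2
  have hwf : WellFounded later :=
    have : IsTrans _ later := ⟨fun _ _ _ h h' => lt_trans h' h⟩
    have : Std.Irrefl later := ⟨fun _ => lt_irrefl _⟩
    Finite.wellFounded_of_trans_of_irrefl later
  let toProfile : ((Σ i, Fin (G.m i)) → ℕ → ℝ) → G.Profile := fun σ i j =>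
    if hj : j < G.m i then σ ⟨i, j, hj⟩ else 0
  obtain ⟨σ, hσ⟩ := exists_forall_of_wellFounded hwf
    (P := fun x σ d => IsDistOn (G.infoA x.1 x.2) d ∧
      IsOptimalOn (G.infoA x.1 x.2) (contPayoff β (toProfile σ) μ x.1 x.2) d)
    (fun ⟨i, j, hj⟩ σ τ d hστ => by
      have hpayoff : contPayoff β (toProfile σ) μ i j = contPayoff β (toProfile τ) μ i j := by
        refine contPayoff_congr fun q ⟨h, hh, c, hch, hc⟩ => ?_
        by_cases hq : q < G.m i
        · simpa [toProfile, hq] using hστ ⟨i, q, hq⟩ (hPR.ownDepth_lt hj hq hh hch hc)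
        · simp [toProfile, hq]
      exact hpayoff ▸ id)
    (fun ⟨i, j, hj⟩ σ => exists_isDistOn_isOptimalOn (infoA_nonempty hj) _)
  have toProfile_apply : ∀ i j (hj : j < G.m i), toProfile σ i j = σ ⟨i, j, hj⟩ :=
    fun i j hj => dif_pos hj
  refine ⟨toProfile σ, fun i j hj => ?_, fun i j hj => ?_⟩ <;> rw [toProfile_apply i j hj]
  · exact (hσ ⟨i, j, hj⟩).1
  · exact (hσ ⟨i, j, hj⟩).2

lemma PerfectRecall.sum_Ch_mul_oneShotGain (hPR : G.PerfectRecall) (hμ : G.IsBelief μ)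
    (hY : G.YConsistent β μ) (βt : G.Profile) (b : ℕ → ℕ → ℝ) (hj : j < G.m i) :
    ∑ h ∈ G.Info i j, G.Ch i j (G.replace β i b) h *
        G.oneShotGain i (G.replace β i (βt i)) (G.replace β i b) h =
      G.CInfo i j (G.replace β i b) * localGain β βt μ i b j :=
  calc _ = ∑ h ∈ G.Info i j, ∑ a ∈ G.infoA i j, G.CInfo i j (G.replace β i b) *
          ((βt i j a - b j a) * (μ i j h * G.uExpFrom i (G.rho i j β βt) (h ++ [a]))) :=
        Finset.sum_congr rfl fun h hh => by
          rw [← hPR.CInfo_replace_mul_belief hμ hY hj b hh, oneShotGain_replace_of_mem_info hj hh,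
            Finset.mul_sum]
          exact Finset.sum_congr rfl fun a _ => by ring
    _ = G.CInfo i j (G.replace β i b) * localGain β βt μ i b j := by
        rw [Finset.sum_comm, localGain, Finset.mul_sum]
        refine Finset.sum_congr rfl fun a ha => ?_
        rw [contPayoff, hPR.uCond_eq_sum_uExpFrom hj ha]
        simp only [Finset.mul_sum]

theorem PerfectRecall.uExpFrom_replace_sub (hPR : G.PerfectRecall) (hμ : G.IsBelief μ)
    (hY : G.YConsistent β μ) (hr : G.IsSubgameRoot r) (βt : G.Profile) (i : Fin G.n)
    (b : ℕ → ℕ → ℝ) :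
    G.uExpFrom i (G.replace β i (βt i)) r - G.uExpFrom i (G.replace β i b) r =
      ∑ j ∈ G.subgameInfos i r, G.probFrom (G.replace β i b) r (G.infoRoot i j) *
        (G.CInfo i j (G.replace β i b) * localGain β βt μ i b j) := by
  rw [uExpFrom_sub_uExpFrom _ _ _ hr.1, hr.sum_eq_sum_subgameInfos (i := i) fun h hh => by
    rw [oneShotGain_replace_of_notMem_info hh, mul_zero]]
  refine Finset.sum_congr rfl fun j hj => ?_
  obtain ⟨hjm, hpre⟩ := mem_subgameInfos.1 hj
  rw [← hPR.sum_Ch_mul_oneShotGain hμ hY βt b hjm, Finset.mul_sum]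
  refine Finset.sum_congr rfl fun h hh => ?_
  rw [← probFrom_mul_probFrom _ (hr.prefix_infoRoot hjm hpre) (infoRoot_prefix hh),
    Ch_eq_probFrom _ hh, mul_assoc]

lemma IsBehProfile.probFrom_infoRoot_nonneg (hσ : G.IsBehProfile σ) (hr : G.IsSubgameRoot r)
    (hj : j ∈ G.subgameInfos i r) : 0 ≤ G.probFrom σ r (G.infoRoot i j) :=
  hσ.probFrom_nonneg (hr.prefix_infoRoot (mem_subgameInfos.1 hj).1 (mem_subgameInfos.1 hj).2)
    (isSubgameRoot_infoRoot i j).1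

lemma IsSeqRational.uExpFrom_replace_le (hrat : IsSeqRational β βt μ) (hPR : G.PerfectRecall)
    (hμ : G.IsBelief μ) (hY : G.YConsistent β μ) (hβ : G.IsBehProfile β)
    (hb : G.IsBehStrategy i b) (hr : G.IsSubgameRoot r) :
    G.uExpFrom i (G.replace β i b) r ≤ G.uExpFrom i (G.replace β i (βt i)) r := by
  have hβb := hβ.replace hb
  rw [← sub_nonneg, hPR.uExpFrom_replace_sub hμ hY hr]
  refine Finset.sum_nonneg fun j hj => mul_nonneg (hβb.probFrom_infoRoot_nonneg hr hj) ?_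
  have hjm := (mem_subgameInfos.1 hj).1
  exact mul_nonneg (hβb.CInfo_nonneg hjm) (hrat.localGain_nonneg hb hjm)

lemma IsSubgamePerfect.CInfo_mul_localGain_eq_zero (hβ : G.IsSubgamePerfect β)
    (hPR : G.PerfectRecall) (hμ : G.IsBelief μ) (hY : G.YConsistent β μ)
    (hβt : G.IsBehProfile βt) (hrat : IsSeqRational β βt μ) (hj : j < G.m i) :
    G.CInfo i j β * localGain β βt μ i (β i) j = 0 := by
  have hr := isSubgameRoot_infoRoot i j
  have hterm : ∀ q ∈ G.subgameInfos i (G.infoRoot i j), 0 ≤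
      G.probFrom β (G.infoRoot i j) (G.infoRoot i q) *
        (G.CInfo i q β * localGain β βt μ i (β i) q) := fun q hq => by
    have hqm := (mem_subgameInfos.1 hq).1
    exact mul_nonneg (hβ.1.probFrom_infoRoot_nonneg hr hq)
      (mul_nonneg (hβ.1.CInfo_nonneg hqm) (hrat.localGain_nonneg (hβ.1 i) hqm))
  have hdiff := hPR.uExpFrom_replace_sub hμ hY hr βt i (β i)
  rw [replace_eq_self] at hdiff
  have hsum := le_antisymm (hdiff ▸ sub_nonpos.2 (hβ.2 _ hr i (βt i) (hβt i)))
    (Finset.sum_nonneg hterm)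
  have hjr : j ∈ G.subgameInfos i (G.infoRoot i j) :=
    mem_subgameInfos.2 ⟨hj, fun _ => infoRoot_prefix⟩
  have hzero := (Finset.sum_eq_zero_iff_of_nonneg hterm).1 hsum j hjr
  rwa [probFrom_self, one_mul] at hzero

lemma IsSubgamePerfect.isOptimalOn (hβ : G.IsSubgamePerfect β) (hPR : G.PerfectRecall)
    (hμ : G.IsBelief μ) (hY : G.YConsistent β μ) (hβt : G.IsBehProfile βt)
    (hrat : IsSeqRational β βt μ) (hj : j < G.m i) :
    IsOptimalOn (G.infoA i j) (fun a => G.CInfo i j β * contPayoff β βt μ i j a) (β i j) := by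
  intro a ha
  have hzero := hβ.CInfo_mul_localGain_eq_zero hPR hμ hY hβt hrat hj
  rw [localGain_eq_sub, mul_sub, sub_eq_zero] at hzero
  calc G.CInfo i j β * contPayoff β βt μ i j a
      ≤ G.CInfo i j β * ∑ c ∈ G.infoA i j, βt i j c * contPayoff β βt μ i j c :=
        mul_le_mul_of_nonneg_left (hrat i j hj a ha) (hβ.1.CInfo_nonneg hj)
    _ = ∑ c ∈ G.infoA i j, β i j c * (G.CInfo i j β * contPayoff β βt μ i j c) := by
        rw [hzero, Finset.mul_sum]
        exact Finset.sum_congr rfl fun c _ => mul_left_comm _ _ _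

lemma CInfo_mul_localGain_nonpos (hβt : G.IsBehProfile βt) (hj : j < G.m i)
    (hopt : IsOptimalOn (G.infoA i j) (fun a => G.CInfo i j β * contPayoff β βt μ i j a)
      (β i j)) :
    G.CInfo i j β * localGain β βt μ i (β i) j ≤ 0 := by
  rw [localGain_eq_sub, mul_sub, sub_nonpos, Finset.mul_sum, Finset.mul_sum]
  simpa only [mul_left_comm] using IsDistOn.sum_mul_le (hβt i j hj) hopt

lemma isSubgamePerfect_of_isOptimalOn (hPR : G.PerfectRecall) (hβ : G.IsBehProfile β)
    (hμ : G.IsBelief μ) (hY : G.YConsistent β μ) (hβt : G.IsBehProfile βt)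
    (hrat : IsSeqRational β βt μ) (hopt : ∀ (i : Fin G.n) (j : ℕ), j < G.m i →
      IsOptimalOn (G.infoA i j) (fun a => G.CInfo i j β * contPayoff β βt μ i j a) (β i j)) :
    G.IsSubgamePerfect β := by
  refine ⟨hβ, fun r hr i b hb =>
    (hrat.uExpFrom_replace_le hPR hμ hY hβ hb hr).trans (sub_nonpos.1 ?_)⟩
  have hdiff := hPR.uExpFrom_replace_sub hμ hY hr βt i (β i)
  rw [replace_eq_self] at hdiff
  rw [hdiff]
  exact Finset.sum_nonpos fun j hj => mul_nonpos_of_nonneg_of_nonpos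
    (hβ.probFrom_infoRoot_nonneg hr hj)
    (CInfo_mul_localGain_nonpos hβt (mem_subgameInfos.1 hj).1 (hopt i j (mem_subgameInfos.1 hj).1))

theorem isSubgamePerfect_iff_exists_isOptimalOn (hPR : G.PerfectRecall)
    (hβ : G.IsBehProfile β) :
    G.IsSubgamePerfect β ↔ ∃ (βt : G.Profile) (μ : G.Belief),
      G.IsBehProfile βt ∧ G.IsBelief μ ∧ G.YConsistent β μ ∧
      (∀ (i : Fin G.n) (j : ℕ), j < G.m i → IsOptimalOn (G.infoA i j)
        (fun a => G.CInfo i j β * contPayoff β βt μ i j a) (β i j)) ∧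
      IsSeqRational β βt μ := by
  constructor
  · intro hSP
    obtain ⟨μ, hμ, hY⟩ := hβ.exists_yConsistent_belief
    obtain ⟨βt, hβt, hrat⟩ := hPR.exists_isSeqRational β μ
    exact ⟨βt, μ, hβt, hμ, hY, fun _ _ => hSP.isOptimalOn hPR hμ hY hβt hrat, hrat⟩
  · rintro ⟨βt, μ, hβt, hμ, hY, hopt, hrat⟩
    exact isSubgamePerfect_of_isOptimalOn hPR hβ hμ hY hβt hrat hopt

lemma IsBehProfile.forall_isOptimalOn_iff_exists_multipliers (hσ : G.IsBehProfile σ)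
    {v : Fin G.n → ℕ → ℕ → ℝ} :
    (∀ (i : Fin G.n) (j : ℕ), j < G.m i → IsOptimalOn (G.infoA i j) (v i j) (σ i j)) ↔
      ∃ (l : Fin G.n → ℕ → ℕ → ℝ) (z : Fin G.n → ℕ → ℝ), ∀ (i : Fin G.n) (j : ℕ), j < G.m i →
        ∀ a ∈ G.infoA i j, v i j a + l i j a - z i j = 0 ∧ σ i j a * l i j a = 0 ∧
          0 ≤ l i j a := by
  have hiff := fun i j hj =>
    IsDistOn.isOptimalOn_iff_exists_multiplier (v := v i j) (hσ i j hj)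
  constructor
  · intro hopt
    choose! l z hlz using fun i j hj => (hiff i j hj).1 (hopt i j hj)
    exact ⟨l, z, hlz⟩
  · rintro ⟨l, z, hlz⟩ i j hj
    exact (hiff i j hj).2 ⟨l i j, z i j, hlz i j hj⟩

end SequentialRationality

end EFG

/-- Corollary 2: `β*` is a subgame perfect equilibrium in behavioral strategies iff the
polynomial system (19), using conditional expected payoffs, is solvable. -/
theorem stmt11 (G : EFG) (hPR : G.PerfectRecall) (β : G.Profile) (hβ : G.IsBehProfile β) :
    G.IsSubgamePerfect β ↔
      ∃ (βt : G.Profile) (μ : G.Belief) (lam lamt : Fin G.n → ℕ → ℕ → ℝ)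
        (ze zet : Fin G.n → ℕ → ℝ),
        (∀ (i : Fin G.n) (j : ℕ), j < G.m i → ∀ a ∈ G.infoA i j,
          G.CInfo i j β * G.uCond i j a (G.rho i j β βt) μ + lam i j a - ze i j = 0) ∧
        (∀ (i : Fin G.n) (j : ℕ), j < G.m i → ∀ a ∈ G.infoA i j,
          G.uCond i j a (G.rho i j β βt) μ + lamt i j a - zet i j = 0) ∧
        (∀ (i : Fin G.n) (j : ℕ), j < G.m i → ∀ h ∈ G.Info i j,
          G.YInfo i j β * μ i j h = G.Yh i β h ∧ 0 ≤ μ i j h) ∧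
        (∀ (i : Fin G.n) (j : ℕ), j < G.m i →
          (∑ h ∈ G.Info i j, μ i j h = 1) ∧ (∑ a ∈ G.infoA i j, β i j a = 1) ∧
          (∑ a ∈ G.infoA i j, βt i j a = 1)) ∧
        (∀ (i : Fin G.n) (j : ℕ), j < G.m i → ∀ a ∈ G.infoA i j,
          β i j a * lam i j a = 0 ∧ βt i j a * lamt i j a = 0 ∧
          0 ≤ β i j a ∧ 0 ≤ lam i j a ∧ 0 ≤ βt i j a ∧ 0 ≤ lamt i j a) := by
  rw [EFG.isSubgamePerfect_iff_exists_isOptimalOn hPR hβ]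
  constructor
  · rintro ⟨βt, μ, hβt, hμ, hY, hopt, hrat⟩
    obtain ⟨lam, ze, hlam⟩ := hβ.forall_isOptimalOn_iff_exists_multipliers.1 hopt
    obtain ⟨lamt, zet, hlamt⟩ := hβt.forall_isOptimalOn_iff_exists_multipliers.1 hrat
    refine ⟨βt, μ, lam, lamt, ze, zet, fun i j hj a ha => (hlam i j hj a ha).1,
      fun i j hj a ha => (hlamt i j hj a ha).1,
      fun i j hj h hh => ⟨hY i j hj h hh, (hμ i j hj).1 h hh⟩,
      fun i j hj => ⟨(hμ i j hj).2, (hβ i j hj).2, (hβt i j hj).2⟩, fun i j hj a ha => ?_⟩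
    obtain ⟨-, hcomp, hnonneg⟩ := hlam i j hj a ha
    obtain ⟨-, hcompt, hnonnegt⟩ := hlamt i j hj a ha
    exact ⟨hcomp, hcompt, (hβ i j hj).1 a ha, hnonneg, (hβt i j hj).1 a ha, hnonnegt⟩
  · rintro ⟨βt, μ, lam, lamt, ze, zet, hC, hu, hbel, hsum, hcomp⟩
    have hβt : G.IsBehProfile βt := fun i j hj =>
      ⟨fun a ha => (hcomp i j hj a ha).2.2.2.2.1, (hsum i j hj).2.2⟩
    refine ⟨βt, μ, hβt, fun i j hj => ⟨fun h hh => (hbel i j hj h hh).2, (hsum i j hj).1⟩,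
      fun i j hj h hh => (hbel i j hj h hh).1,
      hβ.forall_isOptimalOn_iff_exists_multipliers.2 ⟨lam, ze, fun i j hj a ha => ?_⟩,
      hβt.forall_isOptimalOn_iff_exists_multipliers.2 ⟨lamt, zet, fun i j hj a ha => ?_⟩⟩ <;>
    obtain ⟨hcl, hclt, -, hl, -, hlt⟩ := hcomp i j hj a ha
    · exact ⟨hC i j hj a ha, hcl, hl⟩
    · exact ⟨hu i j hj a ha, hclt, hlt⟩
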